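/- Suppose G acts linearly on a finite dimensional vector space V over a field k whose characteristic is coprime to |G|, and suppose H_{λ,κ} is a PBW deformation of S(V)⋊G. Define γ: V⊗kG → kG by γ(v⊗g) = (1/|G|) Σ_{a,b∈G} λ_{ab}(b, ᵇ⁻¹v) ag, and write γ(v) = γ(v⊗1). Define κ': V×V → kG ⊕ (V⊗kG) by κ'(u,v) = γ(u)γ(v) − γ(v)γ(u) + λ(γ(u), v) − λ(γ(v), u) + κ(u,v) − κ^L(u,v) + (1/|G|) Σ_{g∈G} (1 − γ)((ᵍκ^L)(u,v)), where λ is extended linearly in its first argument to kG, (ᵍκ^L)(u,v) = ᵍ(κ^L(ᵍ⁻¹u, ᵍ⁻¹v)) with ᵍ(w⊗h) = ᵍw⊗ghg⁻¹, and (1 − γ)(x) = x − γ(x) for x ∈ V⊗kG. Then the assignment g ↦ g for g ∈ G and v ↦ v + γ(v) for v ∈ V extends to an isomorphism of filtered algebras f: H_{0,κ'} → H_{λ,κ}. -/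

import Mathlib

open TensorProduct

noncomputable section

namespace DeformKoszul

variable (k G V : Type) [Field k] [Group G] [AddCommGroup V] [Module k V]

/-- The free `k`-algebra on the vector space `kG ⊕ V`. -/
abbrev FreeAlg := TensorAlgebra k (MonoidAlgebra k G × V)

/-- The canonical embedding of the group algebra `kG` into the free algebra. -/
def gIn : MonoidAlgebra k G →ₗ[k] FreeAlg k G V :=
  (TensorAlgebra.ι k).comp (LinearMap.inl k (MonoidAlgebra k G) V)

/-- The canonical embedding of `V` into the free algebra. -/
def vIn : V →ₗ[k] FreeAlg k G V :=
  (TensorAlgebra.ι k).comp (LinearMap.inr k (MonoidAlgebra k G) V)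

/-- `V ⊗ kG → FreeAlg`, `v ⊗ x ↦ v·x`. -/
def embVG : V ⊗[k] MonoidAlgebra k G →ₗ[k] FreeAlg k G V :=
  (LinearMap.mul' k _).comp (TensorProduct.map (vIn k G V) (gIn k G V))

variable (ρ : Representation k G V)

/-- The defining relations of `H_{λ,κ}`: `kG` is a subalgebra (with the same unit),
`g·v = (ᵍv)·g + λ(g,v)`, and `v·w = w·v + κ^L(v,w) + κ^C(v,w)`. -/
inductive PRel (lam : G → V →ₗ[k] MonoidAlgebra k G)
    (κC : V →ₗ[k] V →ₗ[k] MonoidAlgebra k G)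
    (κL : V →ₗ[k] V →ₗ[k] (V ⊗[k] MonoidAlgebra k G)) :
    FreeAlg k G V → FreeAlg k G V → Prop
  | unit : PRel lam κC κL (gIn k G V 1) 1
  | gmul (x y : MonoidAlgebra k G) :
      PRel lam κC κL (gIn k G V x * gIn k G V y) (gIn k G V (x * y))
  | act (g : G) (v : V) :
      PRel lam κC κL (gIn k G V (MonoidAlgebra.of k G g) * vIn k G V v)
        (vIn k G V (ρ g v) * gIn k G V (MonoidAlgebra.of k G g) + gIn k G V (lam g v))
  | comm (v w : V) :
      PRel lam κC κL (vIn k G V v * vIn k G V w)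
        (vIn k G V w * vIn k G V v + embVG k G V (κL v w) + gIn k G V (κC v w))

variable (lam : G → V →ₗ[k] MonoidAlgebra k G)
    (κC : V →ₗ[k] V →ₗ[k] MonoidAlgebra k G)
    (κL : V →ₗ[k] V →ₗ[k] (V ⊗[k] MonoidAlgebra k G))

/-- The algebra `H_{λ,κ}`.  For `lam = 0`, `κC = 0`, `κL = 0` this is (the presentation
of) the skew group algebra `S(V) ⋊ G`. -/
abbrev HP := RingQuot (PRel k G V ρ lam κC κL)

/-- The quotient map onto `H_{λ,κ}`. -/
def toHP : FreeAlg k G V →ₐ[k] HP k G V ρ lam κC κL :=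
  RingQuot.mkAlgHom k (PRel k G V ρ lam κC κL)

/-- Degree-`n` part of the free algebra: `kG` has degree 0 and `V` degree 1. -/
def grT : ℕ → Submodule k (FreeAlg k G V)
  | 0 => Subalgebra.toSubmodule (Algebra.adjoin k (Set.range (gIn k G V)))
  | n+1 => grT n * (LinearMap.range (vIn k G V) * grT 0)

/-- Filtration of the free algebra, `kG` in degree 0 and `V` in degree 1. -/
def filtT : ℕ → Submodule k (FreeAlg k G V)
  | 0 => grT k G V 0
  | n+1 => filtT n ⊔ grT k G V (n+1)

/-- The induced filtration on `H_{λ,κ}`. -/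
def filtP (d : ℕ) : Submodule k (HP k G V ρ lam κC κL) :=
  (filtT k G V d).map (toHP k G V ρ lam κC κL).toLinearMap

/-- `H_{λ,κ}` is a PBW deformation of `S(V) ⋊ G`:  the associated graded algebra is
`S(V) ⋊ G`, equivalently (all filtered pieces being finite dimensional) each filtered
piece has the same dimension as the corresponding one of `S(V) ⋊ G = H_{0,0}`. -/
def IsPBWP : Prop :=
  ∀ d, Module.finrank k (filtP k G V ρ lam κC κL d) = Module.finrank k (filtP k G V ρ 0 0 0 d)

section Untwist

variable [Fintype G]

/-- Extension of `λ` linearly in its first argument to `kG`. -/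
def lamExt : MonoidAlgebra k G →ₗ[k] V →ₗ[k] MonoidAlgebra k G :=
  (Finsupp.lift (V →ₗ[k] MonoidAlgebra k G) k G lam).comp
    (MonoidAlgebra.coeffLinearEquiv k).toLinearMap

/-- `γ : V ⊗ kG → kG`, `γ(v ⊗ g) = (1/|G|) Σ_{a,b} λ_{ab}(b, ᵇ⁻¹v)·a·g`. -/
def γmap : V ⊗[k] MonoidAlgebra k G →ₗ[k] MonoidAlgebra k G :=
  (Fintype.card G : k)⁻¹ • ∑ a : G, ∑ b : G,
    (TensorProduct.lid k (MonoidAlgebra k G)).toLinearMap.comp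
      (TensorProduct.map
        ((Finsupp.lapply (a * b)).comp
          ((MonoidAlgebra.coeffLinearEquiv k).toLinearMap.comp ((lam b).comp (ρ b⁻¹))))
        (LinearMap.mulLeft k (MonoidAlgebra.of k G a)))

/-- `γ(v) := γ(v ⊗ 1)`. -/
def γ0 : V →ₗ[k] MonoidAlgebra k G :=
  (γmap k G V ρ lam).comp ((TensorProduct.mk k V (MonoidAlgebra k G)).flip 1)

/-- conjugation `x ↦ g·x·g⁻¹` on the group algebra. -/
def conjKG (g : G) : MonoidAlgebra k G →ₗ[k] MonoidAlgebra k G :=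
  (LinearMap.mulRight k (MonoidAlgebra.of k G g⁻¹)).comp
    (LinearMap.mulLeft k (MonoidAlgebra.of k G g))

/-- the `G`-action `ᵍ(w ⊗ h) = ᵍw ⊗ ghg⁻¹` on `V ⊗ kG`. -/
def conjVG (g : G) : V ⊗[k] MonoidAlgebra k G →ₗ[k] V ⊗[k] MonoidAlgebra k G :=
  TensorProduct.map (ρ g) (conjKG k G g)

/-- `(ᵍκ^L)(u,v) = ᵍ(κ^L(ᵍ⁻¹u, ᵍ⁻¹v))`. -/
def κLconj (g : G) : V →ₗ[k] V →ₗ[k] (V ⊗[k] MonoidAlgebra k G) :=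
  ((κL.comp (ρ g⁻¹)).compl₂ (ρ g⁻¹)).compr₂ (conjVG k G V ρ g)

/-- the `V ⊗ kG`-component of `κ'`:  `(1/|G|) Σ_g (ᵍκ^L)(u,v)`. -/
def κL' : V →ₗ[k] V →ₗ[k] (V ⊗[k] MonoidAlgebra k G) :=
  (Fintype.card G : k)⁻¹ • ∑ g : G, κLconj k G V ρ κL g

/-- the `kG`-component of `κ'`:
`γ(u)γ(v) − γ(v)γ(u) + λ(γ(u),v) − λ(γ(v),u) + κ^C(u,v) − (1/|G|) Σ_g γ((ᵍκ^L)(u,v))`. -/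
def κC' : V →ₗ[k] V →ₗ[k] MonoidAlgebra k G :=
  (LinearMap.mul k (MonoidAlgebra k G)).compl₁₂ (γ0 k G V ρ lam) (γ0 k G V ρ lam)
  - ((LinearMap.mul k (MonoidAlgebra k G)).compl₁₂ (γ0 k G V ρ lam) (γ0 k G V ρ lam)).flip
  + (lamExt k G V lam).comp (γ0 k G V ρ lam)
  - ((lamExt k G V lam).comp (γ0 k G V ρ lam)).flip
  + κC
  - (Fintype.card G : k)⁻¹ • ((∑ g : G, κLconj k G V ρ κL g).compr₂ (γmap k G V ρ lam))

end Untwist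

end DeformKoszul

open DeformKoszul

namespace DeformKoszul
section
variable {k G V : Type} [Field k] [Group G] [AddCommGroup V] [Module k V]
  (ρ : Representation k G V)
    (lam : G → V →ₗ[k] MonoidAlgebra k G)
    (κC : V →ₗ[k] V →ₗ[k] MonoidAlgebra k G)
    (κL : V →ₗ[k] V →ₗ[k] (V ⊗[k] MonoidAlgebra k G))

def iH : MonoidAlgebra k G →ₐ[k] HP k G V ρ lam κC κL :=
  AlgHom.ofLinearMap ((toHP k G V ρ lam κC κL).toLinearMap.comp (gIn k G V))
    (by
      have := RingQuot.mkAlgHom_rel k (PRel.unit (ρ := ρ) (lam := lam) (κC := κC) (κL := κL))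
      simpa [toHP] using this)
    (by
      intro x y
      have := RingQuot.mkAlgHom_rel k (PRel.gmul (ρ := ρ) (lam := lam) (κC := κC) (κL := κL) x y)
      simpa [toHP] using this.symm)

def jH : V →ₗ[k] HP k G V ρ lam κC κL :=
  (toHP k G V ρ lam κC κL).toLinearMap.comp (vIn k G V)

def EH : V ⊗[k] MonoidAlgebra k G →ₗ[k] HP k G V ρ lam κC κL :=
  (toHP k G V ρ lam κC κL).toLinearMap.comp (embVG k G V)

lemma toHP_gIn (x : MonoidAlgebra k G) :
    toHP k G V ρ lam κC κL (gIn k G V x) = iH ρ lam κC κL x := rfl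
lemma toHP_vIn (v : V) :
    toHP k G V ρ lam κC κL (vIn k G V v) = jH ρ lam κC κL v := rfl
lemma toHP_emb (t) :
    toHP k G V ρ lam κC κL (embVG k G V t) = EH ρ lam κC κL t := rfl

lemma EH_tmul (v : V) (x : MonoidAlgebra k G) :
    EH ρ lam κC κL (v ⊗ₜ x) = jH ρ lam κC κL v * iH ρ lam κC κL x := by
  rw [← toHP_emb, ← toHP_vIn, ← toHP_gIn, ← map_mul]
  simp [embVG]

lemma act_H (g : G) (v : V) :
    iH ρ lam κC κL (MonoidAlgebra.of k G g) * jH ρ lam κC κL v =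
      jH ρ lam κC κL (ρ g v) * iH ρ lam κC κL (MonoidAlgebra.of k G g)
        + iH ρ lam κC κL (lam g v) := by
  have := RingQuot.mkAlgHom_rel k (PRel.act (ρ := ρ) (lam := lam) (κC := κC) (κL := κL) g v)
  simp only [map_mul, map_add] at this
  exact this

lemma comm_H (u v : V) :
    jH ρ lam κC κL u * jH ρ lam κC κL v =
      jH ρ lam κC κL v * jH ρ lam κC κL u + EH ρ lam κC κL (κL u v)
        + iH ρ lam κC κL (κC u v) := by
  have := RingQuot.mkAlgHom_rel k (PRel.comm (ρ := ρ) (lam := lam) (κC := κC) (κL := κL) u v)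
  simp only [map_mul, map_add] at this
  exact this

/-- universal property -/
def liftF {A : Type} [Ring A] [Algebra k A] (i : MonoidAlgebra k G →ₐ[k] A) (j : V →ₗ[k] A) :
    FreeAlg k G V →ₐ[k] A := TensorAlgebra.lift k (i.toLinearMap.coprod j)

section
variable {A : Type} [Ring A] [Algebra k A] (i : MonoidAlgebra k G →ₐ[k] A) (j : V →ₗ[k] A)
@[simp] lemma liftF_g (x) : liftF i j (gIn k G V x) = i x := by simp [liftF, gIn]
@[simp] lemma liftF_v (x) : liftF i j (vIn k G V x) = j x := by simp [liftF, vIn]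

/-- multiplication map -/
def mE : V ⊗[k] MonoidAlgebra k G →ₗ[k] A :=
  (LinearMap.mul' k _).comp (TensorProduct.map j i.toLinearMap)
@[simp] lemma mE_tmul (v x) : mE i j (v ⊗ₜ x) = j v * i x := by simp [mE]

lemma liftF_emb (t) : liftF i j (embVG k G V t) = mE i j t := by
  induction t with
  | zero => simp
  | add x y hx hy => simp [hx, hy]
  | tmul v x => simp [embVG]

lemma hom_ext_free {f f' : FreeAlg k G V →ₐ[k] A} (hg : ∀ x, f (gIn k G V x) = f' (gIn k G V x))
    (hv : ∀ x, f (vIn k G V x) = f' (vIn k G V x)) : f = f' := by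
  apply TensorAlgebra.hom_ext
  apply LinearMap.prod_ext
  · refine LinearMap.ext fun x => ?_
    exact hg x
  · refine LinearMap.ext fun x => ?_
    exact hv x

def liftH (h1 : ∀ g v, i (MonoidAlgebra.of k G g) * j v =
      j (ρ g v) * i (MonoidAlgebra.of k G g) + i (lam g v))
    (h2 : ∀ u v, j u * j v = j v * j u + mE i j (κL u v) + i (κC u v)) :
    HP k G V ρ lam κC κL →ₐ[k] A :=
  RingQuot.liftAlgHom k ⟨liftF i j, by
    intro a b h
    induction h with
    | unit => simp
    | gmul x y => simp
    | act g v => simpa using h1 g v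
    | comm u v => simpa [liftF_emb] using h2 u v⟩

variable (h1 : ∀ g v, i (MonoidAlgebra.of k G g) * j v =
      j (ρ g v) * i (MonoidAlgebra.of k G g) + i (lam g v))
    (h2 : ∀ u v, j u * j v = j v * j u + mE i j (κL u v) + i (κC u v))

lemma liftH_toHP (x) : liftH ρ lam κC κL i j h1 h2 (toHP k G V ρ lam κC κL x) = liftF i j x := by
  simp [liftH, toHP]

lemma hom_ext_H {f f' : HP k G V ρ lam κC κL →ₐ[k] A}
    (hg : ∀ x, f (iH ρ lam κC κL x) = f' (iH ρ lam κC κL x))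
    (hv : ∀ x, f (jH ρ lam κC κL x) = f' (jH ρ lam κC κL x)) : f = f' := by
  apply RingQuot.ringQuot_ext'
  exact hom_ext_free hg hv
end

lemma EH_eq : EH ρ lam κC κL = mE (iH ρ lam κC κL) (jH ρ lam κC κL) := by
  ext v x
  all_goals simp [EH_tmul]

/-- `σ(g)(v) = ᵍv ⊗ g` -/
def σm : MonoidAlgebra k G →ₗ[k] V →ₗ[k] (V ⊗[k] MonoidAlgebra k G) :=
  (Finsupp.lift _ k G (fun g => ((TensorProduct.mk k V (MonoidAlgebra k G)).flip
    (MonoidAlgebra.of k G g)).comp (ρ g))).comp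
    (MonoidAlgebra.coeffLinearEquiv k).toLinearMap

lemma σm_of (g v) : σm ρ (MonoidAlgebra.of k G g) v = ρ g v ⊗ₜ MonoidAlgebra.of k G g := by
  simp [σm]
lemma lamExt_of [Fintype G] (g v) : lamExt k G V lam (MonoidAlgebra.of k G g) v = lam g v := by
  simp [lamExt]

lemma kG_ind {p : MonoidAlgebra k G → Prop} (x) (h : ∀ g, p (MonoidAlgebra.of k G g))
    (ha : ∀ x y, p x → p y → p (x + y)) (hs : ∀ (c : k) x, p x → p (c • x)) : p x :=
  MonoidAlgebra.induction_on x h ha hs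

lemma act_ext [Fintype G] (x : MonoidAlgebra k G) (v : V) :
    iH ρ lam κC κL x * jH ρ lam κC κL v =
      EH ρ lam κC κL (σm ρ x v) + iH ρ lam κC κL (lamExt k G V lam x v) := by
  induction x using kG_ind with
  | h g => rw [act_H, σm_of, EH_tmul, lamExt_of]
  | ha x y hx hy => simp only [map_add, add_mul, hx, hy, LinearMap.add_apply]; abel
  | hs c x hx => simp only [map_smul, smul_mul_assoc, hx, LinearMap.smul_apply, smul_add]

lemma EH_mul (t) (x : MonoidAlgebra k G) :
    EH ρ lam κC κL t * iH ρ lam κC κL x =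
      EH ρ lam κC κL (LinearMap.lTensor V (LinearMap.mulRight k x) t) := by
  induction t with
  | zero => simp
  | add a b ha hb => simp [ha, hb, add_mul]
  | tmul v y => simp [EH_tmul, mul_assoc]

lemma g_mul_EH (g : G) (t) : ∃ c,
    iH ρ lam κC κL (MonoidAlgebra.of k G g) * EH ρ lam κC κL t =
      EH ρ lam κC κL (TensorProduct.map (ρ g) (LinearMap.mulLeft k (MonoidAlgebra.of k G g)) t)
        + iH ρ lam κC κL c := by
  induction t with
  | zero => exact ⟨0, by simp⟩
  | add a b ha hb =>
    obtain ⟨c, hc⟩ := ha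
    obtain ⟨d, hd⟩ := hb
    refine ⟨c + d, ?_⟩
    rw [map_add, mul_add, hc, hd]; simp only [map_add]; abel
  | tmul v y =>
    refine ⟨lam g v * y, ?_⟩
    rw [EH_tmul, ← mul_assoc, act_H, add_mul, TensorProduct.map_tmul, EH_tmul]
    simp [mul_assoc]

def Φ : MonoidAlgebra k G × (V ⊗[k] MonoidAlgebra k G) →ₗ[k] HP k G V ρ lam κC κL :=
  (iH ρ lam κC κL).toLinearMap.coprod (EH ρ lam κC κL)

lemma Φ_apply (p) : Φ ρ lam κC κL p = iH ρ lam κC κL p.1 + EH ρ lam κC κL p.2 := rfl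

lemma grT0_le : (grT k G V 0).map (toHP k G V ρ lam κC κL).toLinearMap ≤
    LinearMap.range (iH ρ lam κC κL).toLinearMap := by
  rw [Submodule.map_le_iff_le_comap]
  have : Algebra.adjoin k (Set.range (gIn k G V)) ≤
      (iH ρ lam κC κL).range.comap (toHP k G V ρ lam κC κL) := by
    apply Algebra.adjoin_le
    rintro _ ⟨x, rfl⟩
    exact ⟨x, rfl⟩
  intro x hx
  rw [grT] at hx
  exact this hx

lemma gIn_mem (x) : gIn k G V x ∈ grT k G V 0 := by
  rw [grT]; exact Algebra.subset_adjoin (Set.mem_range_self x)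
lemma one_mem : 1 ∈ grT k G V 0 := by
  rw [grT]; exact (Algebra.adjoin k (Set.range (gIn k G V))).one_mem
lemma vg_mem (v x) : vIn k G V v * gIn k G V x ∈ grT k G V 1 := by
  rw [grT, ← one_mul (vIn k G V v * gIn k G V x)]
  exact Submodule.mul_mem_mul one_mem (Submodule.mul_mem_mul ⟨v, rfl⟩ (gIn_mem x))

lemma filtP1 [Fintype G] : filtP k G V ρ lam κC κL 1 = LinearMap.range (Φ ρ lam κC κL) := by
  apply le_antisymm
  · rw [filtP, filtT, filtT, Submodule.map_sup]
    apply sup_le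
    · refine (grT0_le ρ lam κC κL).trans ?_
      rintro _ ⟨x, rfl⟩
      exact ⟨(x, 0), by simp [Φ_apply]⟩
    · rw [grT, Submodule.map_mul, Submodule.map_mul, Submodule.mul_le]
      intro a ha b hb
      obtain ⟨x, rfl⟩ := grT0_le ρ lam κC κL ha
      refine Submodule.mul_induction_on hb ?_ ?_
      · rintro _ ⟨_, ⟨v, rfl⟩, rfl⟩ c hc
        obtain ⟨y, rfl⟩ := grT0_le ρ lam κC κL hc
        refine ⟨(lamExt k G V lam x v * y,
          LinearMap.lTensor V (LinearMap.mulRight k y) (σm ρ x v)), ?_⟩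
        rw [Φ_apply]
        change _ = iH ρ lam κC κL x * (jH ρ lam κC κL v * iH ρ lam κC κL y)
        rw [← mul_assoc, act_ext, add_mul, EH_mul, map_mul, add_comm]
      · intro c d hc hd
        rw [mul_add]
        exact add_mem hc hd
  · rintro _ ⟨⟨x, t⟩, rfl⟩
    rw [Φ_apply]
    rw [filtP, filtT, filtT]
    apply add_mem
    · exact ⟨gIn k G V x, Submodule.mem_sup_left (gIn_mem x), rfl⟩
    · refine ⟨embVG k G V t, Submodule.mem_sup_right ?_, rfl⟩
      induction t with
      | zero => simp
      | add a b ha hb => rw [map_add]; exact add_mem ha hb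
      | tmul v y => simpa [embVG] using vg_mem v y

abbrev MM (k G V : Type) [Field k] [Group G] [AddCommGroup V] [Module k V] :=
  MonoidAlgebra k G × (V ⊗[k] MonoidAlgebra k G)

def repG : G →* Module.End k (MM k G V) where
  toFun g := LinearMap.prodMap (LinearMap.mulLeft k (MonoidAlgebra.of k G g))
    (TensorProduct.map (ρ g) (LinearMap.mulLeft k (MonoidAlgebra.of k G g)))
  map_one' := by
    rw [map_one, map_one, LinearMap.mulLeft_one]
    change LinearMap.prodMap _ (TensorProduct.map LinearMap.id LinearMap.id) = _
    rw [TensorProduct.map_id]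
    rfl
  map_mul' g h := by
    rw [map_mul, map_mul, LinearMap.mulLeft_mul]
    change LinearMap.prodMap _ (TensorProduct.map (_ ∘ₗ _) _) = _
    rw [TensorProduct.map_comp]
    rfl

def i0 : MonoidAlgebra k G →ₐ[k] Module.End k (MM k G V) :=
  MonoidAlgebra.lift k _ G (repG ρ)

def j0 : V →ₗ[k] Module.End k (MM k G V) where
  toFun v := (LinearMap.inr k _ _).comp ((TensorProduct.mk k V _ v).comp (LinearMap.fst k _ _))
  map_add' u v := by ext <;> simp
  map_smul' u v := by ext <;> simp

lemma j0_apply (v : V) (p : MM k G V) : j0 v p = (0, v ⊗ₜ p.1) := rfl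
lemma i0_of (g : G) (p : MM k G V) : i0 ρ (MonoidAlgebra.of k G g) p =
  (MonoidAlgebra.of k G g * p.1,
    TensorProduct.map (ρ g) (LinearMap.mulLeft k (MonoidAlgebra.of k G g)) p.2) := by
  rw [i0, MonoidAlgebra.lift_of]; rfl
lemma i0_one (x : MonoidAlgebra k G) : i0 ρ x (1, 0) = (x, 0) := by
  induction x using kG_ind with
  | h g => rw [i0_of]; simp
  | ha x y hx hy => simp [hx, hy]
  | hs c x hx => simp [hx]

def ev0 : HP k G V ρ 0 0 0 →ₐ[k] Module.End k (MM k G V) :=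
  liftH ρ 0 0 0 (i0 ρ) j0
    (by
      intro g v
      apply LinearMap.ext
      intro p
      simp only [Module.End.mul_apply, LinearMap.add_apply, i0_of, j0_apply]
      simp)
    (by
      intro u v
      apply LinearMap.ext
      intro p
      simp [Module.End.mul_apply, j0_apply])

lemma Φ0_inj : Function.Injective (Φ ρ (0 : G → V →ₗ[k] MonoidAlgebra k G) 0 0) := by
  have key : ∀ p, ev0 ρ (Φ ρ 0 0 0 p) (1, 0) = p := by
    rintro ⟨x, t⟩
    have hE : ev0 ρ (EH ρ 0 0 0 t) (1, 0) = (0, t) := by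
      rw [← toHP_emb, ev0, liftH_toHP, liftF_emb]
      induction t with
      | zero => simp; rfl
      | add a b ha hb => simp [ha, hb]
      | tmul v y => simp [Module.End.mul_apply, i0_one, j0_apply]
    have hi : ev0 ρ (iH ρ 0 0 0 x) (1, 0) = (x, 0) := by
      rw [← toHP_gIn, ev0, liftH_toHP, liftF_g, i0_one]
    rw [Φ_apply, map_add, LinearMap.add_apply, hE, hi]; simp
  intro p q h
  rw [← key p, h, key q]

lemma Φ_inj [Fintype G] [FiniteDimensional k V] (hPBW : IsPBWP k G V ρ lam κC κL) :
    Function.Injective (Φ ρ lam κC κL) := by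
  have h := hPBW 1
  haveI : Module.Finite k (MonoidAlgebra k G) :=
    Module.Finite.equiv (MonoidAlgebra.coeffLinearEquiv (M := G) (S := k) k).symm
  rw [filtP1, filtP1, LinearMap.finrank_range_of_inj (Φ0_inj ρ)] at h
  have h3 := LinearMap.finrank_range_add_finrank_ker (Φ ρ lam κC κL)
  rw [← LinearMap.ker_eq_bot, ← Submodule.finrank_eq_zero (R := k)]
  omega
end
end DeformKoszul

namespace DeformKoszul
section
variable {k G V : Type} [Field k] [Group G] [Fintype G] [AddCommGroup V] [Module k V]
  (ρ : Representation k G V)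
    (lam : G → V →ₗ[k] MonoidAlgebra k G)
    (κC : V →ₗ[k] V →ₗ[k] MonoidAlgebra k G)
    (κL : V →ₗ[k] V →ₗ[k] (V ⊗[k] MonoidAlgebra k G))

lemma sum_coeff (y : MonoidAlgebra k G) (b : G) :
    ∑ a : G, y.coeff (a * b) • MonoidAlgebra.of k G a = y * MonoidAlgebra.of k G b⁻¹ := by
  induction y using kG_ind with
  | h g =>
    rw [← map_mul, Finset.sum_eq_single (g * b⁻¹)]
    · simp
    · intro a _ ha
      have : g ≠ a * b := by rintro rfl; simp at ha
      simp [MonoidAlgebra.of_apply, MonoidAlgebra.coeff_single, Finsupp.single_apply, this]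
    · simp
  | ha x y hx hy => simp only [MonoidAlgebra.coeff_add, Finsupp.add_apply, add_smul, Finset.sum_add_distrib, hx, hy, add_mul]
  | hs c x hx => simp only [MonoidAlgebra.coeff_smul, Finsupp.smul_apply, smul_assoc, ← Finset.smul_sum, hx, smul_mul_assoc]

lemma γmap_tmul' (v : V) (x : MonoidAlgebra k G) : γmap k G V ρ lam (v ⊗ₜ x) =
    ((Fintype.card G : k)⁻¹ • ∑ b : G, lam b (ρ b⁻¹ v) * MonoidAlgebra.of k G b⁻¹) * x := by
  rw [γmap, Finset.sum_comm]
  simp only [LinearMap.smul_apply, LinearMap.sum_apply, smul_mul_assoc, Finset.sum_mul]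
  congr 1
  refine Finset.sum_congr rfl fun b _ => ?_
  rw [← sum_coeff, Finset.sum_mul]
  refine Finset.sum_congr rfl fun a _ => ?_
  rw [smul_mul_assoc]
  rfl

lemma γ0_eq (v : V) : γ0 k G V ρ lam v =
    (Fintype.card G : k)⁻¹ • ∑ b : G, lam b (ρ b⁻¹ v) * MonoidAlgebra.of k G b⁻¹ := by
  change γmap k G V ρ lam (v ⊗ₜ 1) = _
  rw [γmap_tmul', mul_one]

lemma γmap_tmul (v : V) (x : MonoidAlgebra k G) :
    γmap k G V ρ lam (v ⊗ₜ x) = γ0 k G V ρ lam v * x := by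
  rw [γmap_tmul', γ0_eq]

lemma Φ_cancel (hΦ : Function.Injective (Φ ρ lam κC κL)) {c d : MonoidAlgebra k G}
    {X Y : V ⊗[k] MonoidAlgebra k G}
    (h : EH ρ lam κC κL X + iH ρ lam κC κL c = EH ρ lam κC κL Y + iH ρ lam κC κL d) :
    X = Y := by
  have : (c, X) = (d, Y) := hΦ (by rw [Φ_apply, Φ_apply, add_comm, h, add_comm])
  exact (Prod.mk.inj this).2

lemma lam_cocycle (hΦ : Function.Injective (Φ ρ lam κC κL)) (g h : G) (v : V) :
    lam (g * h) v = lam g (ρ h v) * MonoidAlgebra.of k G h + MonoidAlgebra.of k G g * lam h v := by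
  have inj : Function.Injective (iH ρ lam κC κL) := by
    intro a b hab
    have : (a, (0 : V ⊗[k] MonoidAlgebra k G)) = (b, 0) :=
      hΦ (by rw [Φ_apply, Φ_apply]; simp [hab])
    exact (Prod.mk.inj this).1
  apply inj
  have h1 := act_H ρ lam κC κL (g * h) v
  rw [map_mul, map_mul, mul_assoc, act_H, mul_add, ← mul_assoc, act_H, add_mul] at h1
  rw [map_add, map_mul, map_mul]
  rw [map_mul ρ, Module.End.mul_apply, ← mul_assoc] at h1
  rw [add_assoc] at h1
  exact (add_left_cancel h1).symm

variable (hcard : (Fintype.card G : k) ≠ 0)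
include hcard

lemma γ_act (hΦ : Function.Injective (Φ ρ lam κC κL)) (g : G) (v : V) :
    γ0 k G V ρ lam (ρ g v) * MonoidAlgebra.of k G g =
      lam g v + MonoidAlgebra.of k G g * γ0 k G V ρ lam v := by
  rw [γ0_eq, γ0_eq, smul_mul_assoc, Finset.sum_mul,
    ← Fintype.sum_equiv (Equiv.mulLeft g) _ _ (fun _ => rfl)]
  have : ∀ c : G, lam (Equiv.mulLeft g c) (ρ (Equiv.mulLeft g c)⁻¹ (ρ g v)) *
      MonoidAlgebra.of k G (Equiv.mulLeft g c)⁻¹ * MonoidAlgebra.of k G g =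
      lam g v + MonoidAlgebra.of k G g * (lam c (ρ c⁻¹ v) * MonoidAlgebra.of k G c⁻¹) := by
    intro c
    simp only [Equiv.coe_mulLeft]
    rw [mul_assoc, ← map_mul, mul_inv_rev, inv_mul_cancel_right, map_mul ρ, Module.End.mul_apply,
      Representation.inv_self_apply, lam_cocycle ρ lam κC κL hΦ, add_mul, Representation.self_inv_apply,
      mul_assoc, ← map_mul, mul_inv_cancel, map_one, mul_one, mul_assoc]
  rw [Finset.sum_congr rfl (fun c _ => this c), Finset.sum_add_distrib, smul_add, ← Finset.mul_sum,
    mul_smul_comm]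
  congr 1
  simp only [Finset.sum_const, Finset.card_univ]
  rw [← Nat.cast_smul_eq_nsmul k, smul_smul, inv_mul_cancel₀ hcard, one_smul]

lemma γ_σ (hΦ : Function.Injective (Φ ρ lam κC κL)) (x : MonoidAlgebra k G) (v : V) :
    γmap k G V ρ lam (σm ρ x v) = lamExt k G V lam x v + x * γ0 k G V ρ lam v := by
  induction x using kG_ind with
  | h g => rw [σm_of, γmap_tmul, lamExt_of, γ_act ρ lam κC κL hcard hΦ]
  | ha x y hx hy => simp only [map_add, add_mul, hx, hy, LinearMap.add_apply]; abel
  | hs c x hx => simp only [map_smul, smul_mul_assoc, hx, LinearMap.smul_apply, smul_add]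

omit hcard in
lemma κL_act (hΦ : Function.Injective (Φ ρ lam κC κL)) (g : G) (u v : V) :
    TensorProduct.map (ρ g) (LinearMap.mulLeft k (MonoidAlgebra.of k G g)) (κL u v) =
      LinearMap.lTensor V (LinearMap.mulRight k (MonoidAlgebra.of k G g)) (κL (ρ g u) (ρ g v))
      + (σm ρ (lam g u) v - ρ g v ⊗ₜ lam g u) - (σm ρ (lam g v) u - ρ g u ⊗ₜ lam g v) := by
  obtain ⟨c, hc⟩ := g_mul_EH ρ lam κC κL g (κL u v)
  have e : ∀ u v, iH ρ lam κC κL (MonoidAlgebra.of k G g) *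
      (jH ρ lam κC κL u * jH ρ lam κC κL v) =
      jH ρ lam κC κL (ρ g u) * jH ρ lam κC κL (ρ g v) * iH ρ lam κC κL (MonoidAlgebra.of k G g)
      + EH ρ lam κC κL (ρ g u ⊗ₜ lam g v) + (EH ρ lam κC κL (σm ρ (lam g u) v)
      + iH ρ lam κC κL (lamExt k G V lam (lam g u) v)) := by
    intro u v
    rw [← mul_assoc, act_H, add_mul, act_ext, mul_assoc, act_H, mul_add, EH_tmul, mul_assoc]
  have h1 := congrArg (iH ρ lam κC κL (MonoidAlgebra.of k G g) * ·) (comm_H ρ lam κC κL u v)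
  simp only [mul_add] at h1
  rw [e u v, e v u, hc, comm_H ρ lam κC κL (ρ g u) (ρ g v), add_mul, add_mul, EH_mul] at h1
  apply Φ_cancel ρ lam κC κL hΦ (c := c + MonoidAlgebra.of k G g * κC u v
      + lamExt k G V lam (lam g v) u)
    (d := κC (ρ g u) (ρ g v) * MonoidAlgebra.of k G g + lamExt k G V lam (lam g u) v)
  simp only [map_add, map_sub, map_mul]
  linear_combination (norm := abel) -h1

omit hcard in
lemma conjVG_eq (g : G) (t : V ⊗[k] MonoidAlgebra k G) : conjVG k G V ρ g t =
    LinearMap.lTensor V (LinearMap.mulRight k (MonoidAlgebra.of k G g⁻¹))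
    (TensorProduct.map (ρ g) (LinearMap.mulLeft k (MonoidAlgebra.of k G g)) t) := by
  induction t with
  | zero => simp
  | add a b ha hb => simp only [map_add, ha, hb]
  | tmul v x => simp [conjVG, conjKG]

omit hcard [Fintype G] in
lemma lT_lT (g : G) (t : V ⊗[k] MonoidAlgebra k G) :
    LinearMap.lTensor V (LinearMap.mulRight k (MonoidAlgebra.of k G g⁻¹))
    (LinearMap.lTensor V (LinearMap.mulRight k (MonoidAlgebra.of k G g)) t) = t := by
  induction t with
  | zero => simp
  | add a b ha hb => simp only [map_add, ha, hb]
  | tmul v x =>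
    rw [LinearMap.lTensor_tmul, LinearMap.lTensor_tmul, LinearMap.mulRight_apply,
      LinearMap.mulRight_apply, mul_assoc, ← map_mul, mul_inv_cancel, map_one, mul_one]

omit hcard [Fintype G] in
lemma lT_σ (g : G) (x : MonoidAlgebra k G) (v : V) :
    LinearMap.lTensor V (LinearMap.mulRight k (MonoidAlgebra.of k G g⁻¹)) (σm ρ x (ρ g⁻¹ v)) =
      σm ρ (x * MonoidAlgebra.of k G g⁻¹) v := by
  induction x using kG_ind with
  | h h => rw [← map_mul, σm_of, σm_of, LinearMap.lTensor_tmul, LinearMap.mulRight_apply, map_mul,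
      map_mul, Module.End.mul_apply]
  | ha x y hx hy => simp only [map_add, add_mul, hx, hy, LinearMap.add_apply]
  | hs c x hx => simp only [map_smul, smul_mul_assoc, hx, LinearMap.smul_apply]

lemma κL'_eq (hΦ : Function.Injective (Φ ρ lam κC κL)) (u v : V) :
    κL' k G V ρ κL u v = κL u v
      + (σm ρ (γ0 k G V ρ lam u) v - v ⊗ₜ γ0 k G V ρ lam u)
      - (σm ρ (γ0 k G V ρ lam v) u - u ⊗ₜ γ0 k G V ρ lam v) := by
  have h : ∀ g : G, κLconj k G V ρ κL g u v = κL u v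
      + (σm ρ (lam g (ρ g⁻¹ u) * MonoidAlgebra.of k G g⁻¹) v
        - v ⊗ₜ (lam g (ρ g⁻¹ u) * MonoidAlgebra.of k G g⁻¹))
      - (σm ρ (lam g (ρ g⁻¹ v) * MonoidAlgebra.of k G g⁻¹) u
        - u ⊗ₜ (lam g (ρ g⁻¹ v) * MonoidAlgebra.of k G g⁻¹)) := by
    intro g
    change conjVG k G V ρ g (κL (ρ g⁻¹ u) (ρ g⁻¹ v)) = _
    rw [conjVG_eq, κL_act ρ lam κC κL hΦ]
    simp only [map_add, map_sub, lT_lT, lT_σ, Representation.self_inv_apply,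
      LinearMap.lTensor_tmul, LinearMap.mulRight_apply]
  rw [κL']
  simp only [LinearMap.smul_apply, LinearMap.sum_apply, h, Finset.sum_add_distrib,
    Finset.sum_sub_distrib, γ0_eq, map_smul, map_sum, TensorProduct.tmul_smul,
    TensorProduct.tmul_sum, smul_add, smul_sub]
  congr 3
  simp only [Finset.sum_const, Finset.card_univ]
  rw [← Nat.cast_smul_eq_nsmul k, smul_smul, inv_mul_cancel₀ hcard, one_smul]

omit hcard in
lemma κC'_eq (u v : V) : κC' k G V ρ lam κC κL u v =
    γ0 k G V ρ lam u * γ0 k G V ρ lam v - γ0 k G V ρ lam v * γ0 k G V ρ lam u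
    + lamExt k G V lam (γ0 k G V ρ lam u) v - lamExt k G V lam (γ0 k G V ρ lam v) u
    + κC u v - γmap k G V ρ lam (κL' k G V ρ κL u v) := by
  simp [κC', κL']

def jp : V →ₗ[k] HP k G V ρ lam κC κL :=
  jH ρ lam κC κL + (iH ρ lam κC κL).toLinearMap.comp (γ0 k G V ρ lam)

omit hcard in
lemma jp_apply (v : V) : jp ρ lam κC κL v = jH ρ lam κC κL v + iH ρ lam κC κL (γ0 k G V ρ lam v) :=
  rfl

omit hcard in
lemma mE_jp (t) : mE (iH ρ lam κC κL) (jp ρ lam κC κL) t =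
    EH ρ lam κC κL t + iH ρ lam κC κL (γmap k G V ρ lam t) := by
  induction t with
  | zero => simp
  | add a b ha hb => simp only [map_add, ha, hb]; abel
  | tmul v x => rw [mE_tmul, jp_apply, add_mul, EH_tmul, γmap_tmul, map_mul]

def fHom (hΦ : Function.Injective (Φ ρ lam κC κL)) :
    HP k G V ρ 0 (κC' k G V ρ lam κC κL) (κL' k G V ρ κL) →ₐ[k] HP k G V ρ lam κC κL :=
  liftH ρ 0 _ _ (iH ρ lam κC κL) (jp ρ lam κC κL)
    (by
      intro g v
      rw [jp_apply, jp_apply, mul_add, add_mul, act_H, ← map_mul, ← map_mul,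
        γ_act ρ lam κC κL hcard hΦ]
      simp only [map_add, Pi.zero_apply, LinearMap.zero_apply, map_zero]
      abel)
    (by
      have e : ∀ u v, jp ρ lam κC κL u * jp ρ lam κC κL v =
        jH ρ lam κC κL u * jH ρ lam κC κL v + EH ρ lam κC κL (u ⊗ₜ γ0 k G V ρ lam v)
        + (EH ρ lam κC κL (σm ρ (γ0 k G V ρ lam u) v)
          + iH ρ lam κC κL (lamExt k G V lam (γ0 k G V ρ lam u) v))
        + iH ρ lam κC κL (γ0 k G V ρ lam u * γ0 k G V ρ lam v) := by
        intro u v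
        rw [jp_apply, jp_apply, add_mul, mul_add, mul_add, act_ext, EH_tmul, map_mul]
        abel
      intro u v
      rw [e u v, e v u, mE_jp, κC'_eq, comm_H ρ lam κC κL u v]
      have h := congrArg (EH ρ lam κC κL) (κL'_eq ρ lam κC κL hcard hΦ u v)
      simp only [map_add, map_sub] at h ⊢
      linear_combination (norm := abel) -h)

abbrev HP' := HP k G V ρ 0 (κC' k G V ρ lam κC κL) (κL' k G V ρ κL)
abbrev iH' := iH ρ 0 (κC' k G V ρ lam κC κL) (κL' k G V ρ κL)
abbrev jH' := jH ρ 0 (κC' k G V ρ lam κC κL) (κL' k G V ρ κL)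
abbrev EH' := EH ρ 0 (κC' k G V ρ lam κC κL) (κL' k G V ρ κL)

def jm : V →ₗ[k] HP' ρ lam κC κL :=
  jH' ρ lam κC κL - (iH' ρ lam κC κL).toLinearMap.comp (γ0 k G V ρ lam)

omit hcard in
lemma jm_apply (v : V) :
    jm ρ lam κC κL v = jH' ρ lam κC κL v - iH' ρ lam κC κL (γ0 k G V ρ lam v) :=
  rfl

omit hcard in
lemma mE_jm (t) : mE (iH' ρ lam κC κL) (jm ρ lam κC κL) t =
    EH' ρ lam κC κL t - iH' ρ lam κC κL (γmap k G V ρ lam t) := by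
  induction t with
  | zero => simp
  | add a b ha hb => simp only [map_add, ha, hb]; abel
  | tmul v x => rw [mE_tmul, jm_apply, sub_mul, EH_tmul, γmap_tmul, map_mul]

omit hcard in
lemma act_ext0 (x : MonoidAlgebra k G) (v : V) : iH' ρ lam κC κL x * jH' ρ lam κC κL v =
    EH' ρ lam κC κL (σm ρ x v) := by
  have h0 : lamExt k G V (0 : G → V →ₗ[k] MonoidAlgebra k G) x v = 0 := by
    induction x using kG_ind with
    | h g => rw [lamExt_of]; rfl
    | ha x y hx hy => simp only [map_add, hx, hy, LinearMap.add_apply, add_zero]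
    | hs c x hx => simp only [map_smul, hx, LinearMap.smul_apply, smul_zero]
  rw [act_ext, h0, map_zero, add_zero]

def fInv (hΦ : Function.Injective (Φ ρ lam κC κL)) :
    HP k G V ρ lam κC κL →ₐ[k] HP' ρ lam κC κL :=
  liftH ρ lam κC κL (iH' ρ lam κC κL) (jm ρ lam κC κL)
    (by
      intro g v
      rw [jm_apply, jm_apply, mul_sub, sub_mul, act_H, ← map_mul, ← map_mul,
        γ_act ρ lam κC κL hcard hΦ]
      simp only [map_add, Pi.zero_apply, LinearMap.zero_apply, map_zero]
      abel)
    (by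
      have e : ∀ u v, jm ρ lam κC κL u * jm ρ lam κC κL v =
        jH' ρ lam κC κL u * jH' ρ lam κC κL v - EH' ρ lam κC κL (u ⊗ₜ γ0 k G V ρ lam v)
        - EH' ρ lam κC κL (σm ρ (γ0 k G V ρ lam u) v)
        + iH' ρ lam κC κL (γ0 k G V ρ lam u * γ0 k G V ρ lam v) := by
        intro u v
        rw [jm_apply, jm_apply, sub_mul, mul_sub, mul_sub, act_ext0, EH_tmul, map_mul]
        abel
      intro u v
      rw [e u v, e v u, mE_jm, comm_H _ _ _ _ u v, κC'_eq]
      have h := congrArg (EH' ρ lam κC κL) (κL'_eq ρ lam κC κL hcard hΦ u v)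
      have h' := congrArg (fun t => iH' ρ lam κC κL (γmap k G V ρ lam t))
        (κL'_eq ρ lam κC κL hcard hΦ u v)
      simp only [map_add, map_sub, γ_σ ρ lam κC κL hcard hΦ, γmap_tmul] at h h' ⊢
      linear_combination (norm := abel) h - h')

lemma inv_left (hΦ : Function.Injective (Φ ρ lam κC κL)) :
    (fInv ρ lam κC κL hcard hΦ).comp (fHom ρ lam κC κL hcard hΦ) = AlgHom.id k _ := by
  have hi : ∀ x, fInv ρ lam κC κL hcard hΦ (iH ρ lam κC κL x) = iH' ρ lam κC κL x := by
    intro x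
    rw [fInv, ← toHP_gIn, liftH_toHP, liftF_g]
  apply hom_ext_H
  · intro x
    rw [AlgHom.comp_apply, ← toHP_gIn, fHom, liftH_toHP, liftF_g, hi]; rfl
  · intro v
    rw [AlgHom.comp_apply, ← toHP_vIn, fHom, liftH_toHP, liftF_v, jp_apply, map_add, hi,
      ← toHP_vIn, fInv, liftH_toHP, liftF_v, jm_apply, sub_add_cancel]; rfl

lemma inv_right (hΦ : Function.Injective (Φ ρ lam κC κL)) :
    (fHom ρ lam κC κL hcard hΦ).comp (fInv ρ lam κC κL hcard hΦ) = AlgHom.id k _ := by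
  have hi : ∀ x, fHom ρ lam κC κL hcard hΦ (iH' ρ lam κC κL x) = iH ρ lam κC κL x := by
    intro x
    rw [fHom, ← toHP_gIn, liftH_toHP, liftF_g]
  apply hom_ext_H
  · intro x
    rw [AlgHom.comp_apply, ← toHP_gIn, fInv, liftH_toHP, liftF_g, hi]; rfl
  · intro v
    rw [AlgHom.comp_apply, ← toHP_vIn, fInv, liftH_toHP, liftF_v, jm_apply, map_sub, hi,
      ← toHP_vIn, fHom, liftH_toHP, liftF_v, jp_apply, add_sub_cancel_right]; rfl
end

section filt
variable {k G V : Type} [Field k] [Group G] [AddCommGroup V] [Module k V]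

lemma grT_succ (n) : grT k G V (n + 1) =
    grT k G V n * (LinearMap.range (vIn k G V) * grT k G V 0) := by conv_lhs => rw [grT]

lemma filtT_succ (n) : filtT k G V (n + 1) = filtT k G V n ⊔ grT k G V (n + 1) := by rw [filtT]

lemma filtT_zero : filtT k G V 0 = grT k G V 0 := by rw [filtT]

lemma grT00 : grT k G V 0 * grT k G V 0 ≤ grT k G V 0 := by
  rw [grT, Submodule.mul_le]
  intro a ha b hb
  exact Subalgebra.mul_mem _ ha hb

lemma grT_mul0 (n) : grT k G V n * grT k G V 0 ≤ grT k G V n := by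
  cases n with
  | zero => exact grT00
  | succ n =>
    rw [grT_succ, mul_assoc, mul_assoc]
    exact mul_le_mul' le_rfl (mul_le_mul' le_rfl grT00)

lemma filtT_mul0 (n) : filtT k G V n * grT k G V 0 ≤ filtT k G V n := by
  induction n with
  | zero => exact grT00
  | succ n ih =>
    rw [filtT, Submodule.sup_mul]
    exact sup_le_sup ih (grT_mul0 _)

lemma grT_le_filtT (n) : grT k G V n ≤ filtT k G V n := by
  cases n with
  | zero => exact le_rfl
  | succ n => exact le_sup_right

lemma filtT_mul1 (n) : filtT k G V n * (LinearMap.range (vIn k G V) * grT k G V 0)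
    ≤ filtT k G V (n + 1) := by
  induction n with
  | zero => rw [filtT_succ, grT_succ, filtT_zero]; exact le_sup_right
  | succ n ih =>
    rw [filtT_succ (n + 1), grT_succ (n + 1)]
    nth_rw 1 [filtT_succ n]
    rw [Submodule.sup_mul]
    exact sup_le (ih.trans le_sup_left) le_sup_right

variable (F : FreeAlg k G V →ₐ[k] FreeAlg k G V) (γ : V →ₗ[k] MonoidAlgebra k G)
  (hg : ∀ x, F (gIn k G V x) = gIn k G V x)
  (hv : ∀ v, F (vIn k G V v) = vIn k G V v + gIn k G V (γ v))
include hg hv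

lemma F_grT0 : (grT k G V 0).map F.toLinearMap ≤ grT k G V 0 := by
  rw [Submodule.map_le_iff_le_comap]
  have : Algebra.adjoin k (Set.range (gIn k G V)) ≤
      (Algebra.adjoin k (Set.range (gIn k G V))).comap F := by
    apply Algebra.adjoin_le
    rintro _ ⟨x, rfl⟩
    change F (gIn k G V x) ∈ Algebra.adjoin k (Set.range (gIn k G V))
    rw [hg]
    exact Algebra.subset_adjoin (Set.mem_range_self x)
  intro x hx
  rw [grT] at hx ⊢
  exact this hx

lemma F_grT (n) : (grT k G V n).map F.toLinearMap ≤ filtT k G V n := by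
  induction n with
  | zero => exact F_grT0 F γ hg hv
  | succ n ih =>
    rw [grT_succ, Submodule.map_mul, Submodule.map_mul, filtT_succ]
    have hV : (LinearMap.range (vIn k G V)).map F.toLinearMap ≤
        LinearMap.range (vIn k G V) ⊔ grT k G V 0 := by
      rintro _ ⟨_, ⟨v, rfl⟩, rfl⟩
      change F (vIn k G V v) ∈ _
      rw [hv]
      exact Submodule.add_mem_sup ⟨v, rfl⟩ (gIn_mem _)
    refine (mul_le_mul' ih (mul_le_mul' hV (F_grT0 F γ hg hv))).trans ?_
    rw [Submodule.sup_mul, Submodule.mul_sup]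
    rw [← filtT_succ]
    refine sup_le (filtT_mul1 n) ?_
    rw [filtT_succ]
    exact ((mul_le_mul' le_rfl grT00).trans (filtT_mul0 n)).trans le_sup_left

lemma F_filtT (n) : (filtT k G V n).map F.toLinearMap ≤ filtT k G V n := by
  induction n with
  | zero => exact F_grT0 F γ hg hv
  | succ n ih =>
    rw [filtT, Submodule.map_sup]
    exact sup_le_sup_left (le_refl _) _ |>.trans
      (sup_le (ih.trans le_sup_left) (F_grT F γ hg hv (n + 1)))
end filt

section filt2
variable {k G V : Type} [Field k] [Group G] [AddCommGroup V] [Module k V]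
  (ρ : Representation k G V)
    (lam lam' : G → V →ₗ[k] MonoidAlgebra k G)
    (κC κC' : V →ₗ[k] V →ₗ[k] MonoidAlgebra k G)
    (κL κL' : V →ₗ[k] V →ₗ[k] (V ⊗[k] MonoidAlgebra k G))

lemma filt_map (f : HP k G V ρ lam κC κL →ₐ[k] HP k G V ρ lam' κC' κL')
    (γ : V →ₗ[k] MonoidAlgebra k G)
    (hg : ∀ x, f (iH ρ lam κC κL x) = iH ρ lam' κC' κL' x)
    (hv : ∀ v, f (jH ρ lam κC κL v) = jH ρ lam' κC' κL' v + iH ρ lam' κC' κL' (γ v)) (d) :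
    (filtP k G V ρ lam κC κL d).map f.toLinearMap ≤ filtP k G V ρ lam' κC' κL' d := by
  let F : FreeAlg k G V →ₐ[k] FreeAlg k G V :=
    TensorAlgebra.lift k ((gIn k G V).coprod (vIn k G V + (gIn k G V).comp γ))
  have Fg : ∀ x, F (gIn k G V x) = gIn k G V x := by
    intro x
    simp [F, gIn]
  have Fv : ∀ v, F (vIn k G V v) = vIn k G V v + gIn k G V (γ v) := by
    intro x
    simp [F, vIn, gIn]
  have hF : f.comp (toHP k G V ρ lam κC κL) = (toHP k G V ρ lam' κC' κL').comp F := by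
    apply hom_ext_free
    · intro x
      rw [AlgHom.comp_apply, AlgHom.comp_apply, Fg, toHP_gIn, hg, toHP_gIn]
    · intro x
      rw [AlgHom.comp_apply, AlgHom.comp_apply, Fv, toHP_vIn, hv, map_add, toHP_gIn, toHP_vIn]
  rintro _ ⟨_, ⟨x, hx, rfl⟩, rfl⟩
  refine ⟨F x, F_filtT F γ Fg Fv d ⟨x, hx, rfl⟩, ?_⟩
  exact (DFunLike.congr_fun hF x).symm
end filt2
end DeformKoszul

/-- The explicit untwisting isomorphism (proof of **Theorem 6.1** of
Shepler–Witherspoon, "Deforming group actions on Koszul algebras"):  if char `k` is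
coprime to `|G|` and `H_{λ,κ}` is a PBW deformation of `S(V) ⋊ G`, then with
`γ(v ⊗ g) = (1/|G|) Σ_{a,b} λ_{ab}(b, ᵇ⁻¹v)·ag` and `κ'` defined by
`κ'(u,v) = γ(u)γ(v) − γ(v)γ(u) + λ(γ(u),v) − λ(γ(v),u) + κ(u,v) − κ^L(u,v)
+ (1/|G|) Σ_g (1−γ)((ᵍκ^L)(u,v))`, the assignment `g ↦ g`, `v ↦ v + γ(v)` extends to
an isomorphism of filtered algebras `f : H_{0,κ'} → H_{λ,κ}`. -/
theorem untwisting_isomorphism_explicit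
    (k G V : Type) [Field k] [Group G] [Fintype G] [AddCommGroup V] [Module k V]
    [FiniteDimensional k V] (h2 : (2 : k) ≠ 0) (hcard : (Fintype.card G : k) ≠ 0)
    (ρ : Representation k G V)
    (lam : G → V →ₗ[k] MonoidAlgebra k G)
    (κC : V →ₗ[k] V →ₗ[k] MonoidAlgebra k G)
    (κL : V →ₗ[k] V →ₗ[k] (V ⊗[k] MonoidAlgebra k G))
    (hC : ∀ v, κC v v = 0) (hL : ∀ v, κL v v = 0)
    (hPBW : IsPBWP k G V ρ lam κC κL) :
    ∃ e : HP k G V ρ 0 (κC' k G V ρ lam κC κL) (κL' k G V ρ κL) ≃ₐ[k] HP k G V ρ lam κC κL,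
      (∀ x : MonoidAlgebra k G,
        e (toHP k G V ρ 0 (κC' k G V ρ lam κC κL) (κL' k G V ρ κL) (gIn k G V x))
          = toHP k G V ρ lam κC κL (gIn k G V x)) ∧
      (∀ v : V,
        e (toHP k G V ρ 0 (κC' k G V ρ lam κC κL) (κL' k G V ρ κL) (vIn k G V v))
          = toHP k G V ρ lam κC κL (vIn k G V v)
            + toHP k G V ρ lam κC κL (gIn k G V (γ0 k G V ρ lam v))) ∧
      (∀ d, Submodule.map (e.toLinearEquiv : _ →ₗ[k] _)
          (filtP k G V ρ 0 (κC' k G V ρ lam κC κL) (κL' k G V ρ κL) d)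
        = filtP k G V ρ lam κC κL d) := by

  have hΦ := Φ_inj ρ lam κC κL hPBW
  have g1 : ∀ x, fHom ρ lam κC κL hcard hΦ (iH' ρ lam κC κL x) = iH ρ lam κC κL x := by
    intro x
    rw [fHom, ← toHP_gIn, liftH_toHP, liftF_g]
  have v1 : ∀ v, fHom ρ lam κC κL hcard hΦ (jH' ρ lam κC κL v) =
      jH ρ lam κC κL v + iH ρ lam κC κL (γ0 k G V ρ lam v) := by
    intro x
    rw [fHom, ← toHP_vIn, liftH_toHP, liftF_v, jp_apply]
  have g2 : ∀ x, fInv ρ lam κC κL hcard hΦ (iH ρ lam κC κL x) = iH' ρ lam κC κL x := by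
    intro x
    rw [fInv, ← toHP_gIn, liftH_toHP, liftF_g]
  have v2 : ∀ v, fInv ρ lam κC κL hcard hΦ (jH ρ lam κC κL v) =
      jH' ρ lam κC κL v + iH' ρ lam κC κL ((-γ0 k G V ρ lam) v) := by
    intro x
    rw [fInv, ← toHP_vIn, liftH_toHP, liftF_v, jm_apply, LinearMap.neg_apply, map_neg,
      sub_eq_add_neg]
  refine ⟨AlgEquiv.ofAlgHom (fHom ρ lam κC κL hcard hΦ) (fInv ρ lam κC κL hcard hΦ)
    (inv_right ρ lam κC κL hcard hΦ) (inv_left ρ lam κC κL hcard hΦ), g1, v1, ?_⟩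
  intro d
  apply le_antisymm
  · exact filt_map _ _ _ _ _ _ _ (fHom ρ lam κC κL hcard hΦ) (γ0 k G V ρ lam) g1 v1 d
  · intro x hx
    refine ⟨fInv ρ lam κC κL hcard hΦ x,
      filt_map _ _ _ _ _ _ _ (fInv ρ lam κC κL hcard hΦ) (-γ0 k G V ρ lam) g2 v2 d ⟨x, hx, rfl⟩, ?_⟩
    exact DFunLike.congr_fun (inv_right ρ lam κC κL hcard hΦ) x
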